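/- arXiv:1702.02516 — 5 statements merged into one kernel-verified Lean document; each statement's English description precedes it below -/
import Mathlib

section
/- For every integer N ≥ 1 and every function f : 𝔹^N → 𝔹^N, the map G_f is continuous on the metric space (𝒳, d). -/
/-! If two points are at distance less than `min 1 (9 / (10 N))`, their Boolean states agree
(`eq_of_dE_lt_one`) and their strategies start at the same cell (`head_eq_of_dS_lt`). Then `G_f`
updates the same cell of the same state, so the images have equal states, while the shift multiplies
the strategy distance by exactly `10` (`dS_eq_add_shift`). Near every point `G_f` therefore expands
distances by the factor `10`, and `δ = min (min 1 (9 / (10 N))) (ε / 10)` works. -/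

open scoped BigOperators

/-- Hamming-type distance between two Boolean states: number of differing cells. -/
noncomputable def dE {N : ℕ} (E F : Fin N → Bool) : ℝ :=
  ((Finset.univ.filter fun k => E k ≠ F k).card : ℝ)

/-- Distance between two strategies. -/
noncomputable def dS {N : ℕ} (S T : ℕ → Fin N) : ℝ :=
  (9 / (N : ℝ)) * ∑' k : ℕ, |((S k : ℕ) : ℝ) - ((T k : ℕ) : ℝ)| / 10 ^ (k + 1)

/-- Distance on the phase space 𝒳 = strategies × Boolean states. -/
noncomputable def dX {N : ℕ} (x y : (ℕ → Fin N) × (Fin N → Bool)) : ℝ :=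
  dE x.2 y.2 + dS x.1 y.1

/-- `F_f(k, E)`: iterate the `k`-th cell of `E` using `f`, leaving other cells unchanged. -/
def Ff {N : ℕ} (f : (Fin N → Bool) → Fin N → Bool) (k : Fin N)
    (E : Fin N → Bool) : Fin N → Bool :=
  fun j => if j = k then f E j else E j

/-- `G_f(S, E) = (σ(S), F_f(i(S), E))`, where `σ` is the shift and `i` the initial map. -/
def Gf {N : ℕ} (f : (Fin N → Bool) → Fin N → Bool)
    (x : (ℕ → Fin N) × (Fin N → Bool)) : (ℕ → Fin N) × (Fin N → Bool) :=
  (fun n => x.1 (n + 1), Ff f (x.1 0) x.2)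

/-- The vectorial negation `f₀(x₁, …, x_N) = (¬x₁, …, ¬x_N)`. -/
def f0 {N : ℕ} : (Fin N → Bool) → Fin N → Bool := fun E j => !(E j)

/-- Open sets of the metric topology induced by `dX` on the phase space 𝒳. -/
def isOpenX {N : ℕ} (U : Set ((ℕ → Fin N) × (Fin N → Bool))) : Prop :=
  ∀ x ∈ U, ∃ ε > 0, ∀ y, dX x y < ε → y ∈ U

/-- Cell indices lie in `[0, N)`, so the strategy series is dominated by a geometric series. -/
lemma dS_summable {N : ℕ} (S T : ℕ → Fin N) :
    Summable fun k : ℕ => |((S k : ℕ) : ℝ) - ((T k : ℕ) : ℝ)| / 10 ^ (k + 1) := by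
  have hg : Summable fun k : ℕ => (N : ℝ) * (1 / 10 : ℝ) ^ k :=
    (summable_geometric_of_lt_one (by norm_num) (by norm_num)).mul_left _
  refine Summable.of_nonneg_of_le (fun k => by positivity) (fun k => ?_) hg
  have h1 : |((S k : ℕ) : ℝ) - ((T k : ℕ) : ℝ)| ≤ N := by
    have hS : ((S k : ℕ) : ℝ) ≤ N := by exact_mod_cast (S k).isLt.le
    have hT : ((T k : ℕ) : ℝ) ≤ N := by exact_mod_cast (T k).isLt.le
    have hS0 : (0 : ℝ) ≤ ((S k : ℕ) : ℝ) := Nat.cast_nonneg _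
    have hT0 : (0 : ℝ) ≤ ((T k : ℕ) : ℝ) := Nat.cast_nonneg _
    rw [abs_le]
    constructor <;> linarith
  have h2 : (10 : ℝ) ^ k ≤ 10 ^ (k + 1) := pow_le_pow_right₀ (by norm_num) (by omega)
  calc _ ≤ (N : ℝ) / 10 ^ k := by gcongr
    _ = _ := by rw [one_div, inv_pow, div_eq_mul_inv]

lemma dS_nonneg {N : ℕ} (S T : ℕ → Fin N) : 0 ≤ dS S T :=
  mul_nonneg (by positivity) (tsum_nonneg fun k => by positivity)

lemma dE_nonneg {N : ℕ} (E F : Fin N → Bool) : 0 ≤ dE E F := Nat.cast_nonneg _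

lemma dE_self {N : ℕ} (E : Fin N → Bool) : dE E E = 0 := by simp [dE]

lemma eq_of_dE_lt_one {N : ℕ} {E F : Fin N → Bool} (h : dE E F < 1) : E = F := by
  unfold dE at h
  have h0 : (Finset.univ.filter fun k => E k ≠ F k).card = 0 := by
    have : (Finset.univ.filter fun k => E k ≠ F k).card < 1 := by exact_mod_cast h
    omega
  funext k
  by_contra hk
  have := Finset.card_eq_zero.mp h0
  exact Finset.notMem_empty k (this ▸ Finset.mem_filter.mpr ⟨Finset.mem_univ k, hk⟩)

/-- Splitting off the first term of the series: the shift multiplies the remainder by `10`. -/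
lemma dS_eq_add_shift {N : ℕ} (S T : ℕ → Fin N) :
    dS S T = 9 / (N : ℝ) * (|((S 0 : ℕ) : ℝ) - ((T 0 : ℕ) : ℝ)| / 10)
      + dS (fun n => S (n + 1)) (fun n => T (n + 1)) / 10 := by
  unfold dS
  rw [(dS_summable S T).tsum_eq_zero_add, mul_add, mul_div_assoc, ← tsum_div_const]
  congr 2
  · norm_num
  · refine tsum_congr fun k => ?_
    rw [div_div, ← pow_succ]

/-- Strategies closer than `9 / (10 N)` start at the same cell. -/
lemma head_eq_of_dS_lt {N : ℕ} (hN : 1 ≤ N) {S T : ℕ → Fin N}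
    (h : dS S T < 9 / (10 * (N : ℝ))) : S 0 = T 0 := by
  have hN' : (0 : ℝ) < N := by exact_mod_cast hN
  rw [dS_eq_add_shift] at h
  have h0 := dS_nonneg (fun n => S (n + 1)) (fun n => T (n + 1))
  have hc : (0 : ℝ) < 9 / (10 * N) := by positivity
  have he : 9 / (N : ℝ) * (|((S 0 : ℕ) : ℝ) - ((T 0 : ℕ) : ℝ)| / 10)
      = 9 / (10 * N) * |((S 0 : ℕ) : ℝ) - ((T 0 : ℕ) : ℝ)| := by
    field_simp
  have h1 : |((S 0 : ℕ) : ℝ) - ((T 0 : ℕ) : ℝ)| < 1 := by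
    rw [← mul_lt_iff_lt_one_right hc]
    linarith
  have h2 : |((S 0 : ℕ) : ℤ) - ((T 0 : ℕ) : ℤ)| < 1 := by exact_mod_cast h1
  have h3 := Int.abs_lt_one_iff.mp h2
  exact Fin.ext (by omega)

/-- For every `N ≥ 1` and every `f : 𝔹^N → 𝔹^N`, the map `G_f` is continuous on the
metric space `(𝒳, d)`. -/
theorem Gf_continuous (N : ℕ) (hN : 1 ≤ N)
    (f : (Fin N → Bool) → Fin N → Bool) :
    ∀ x : (ℕ → Fin N) × (Fin N → Bool), ∀ ε > (0 : ℝ), ∃ δ > (0 : ℝ),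
      ∀ y, dX x y < δ → dX (Gf f x) (Gf f y) < ε := by
  intro x ε hε
  have hN' : (0 : ℝ) < N := by exact_mod_cast hN
  refine ⟨min (min 1 (9 / (10 * (N : ℝ)))) (ε / 10), by positivity, ?_⟩
  rintro ⟨T, F⟩ h
  obtain ⟨S, E⟩ := x
  simp only [lt_min_iff, dX] at h
  obtain ⟨⟨h1, h2⟩, h3⟩ := h
  have hE0 := dE_nonneg E F
  have hS0 := dS_nonneg S T
  obtain rfl : E = F := eq_of_dE_lt_one (by linarith)
  have hST : S 0 = T 0 := head_eq_of_dS_lt hN (by linarith)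
  have hs := dS_eq_add_shift S T
  rw [hST, sub_self, abs_zero, zero_div, mul_zero, zero_add] at hs
  simp only [dX, Gf, hST, dE_self]
  linarith
end

section
/- The map G_{f₀} is regular on the metric space (𝒳, d): the set of periodic points of G_{f₀} is dense in 𝒳, i.e., for every x ∈ 𝒳 and every ε > 0 there exist y ∈ 𝒳 and n ∈ ℕ* such that d(x,y) < ε and G_{f₀}^n(y) = y. -/
/-!
Keep the first `m` terms of the strategy and repeat them periodically: the new strategy agrees with
the old one on its first `m` terms, so it lies within `10 ^ (-m)` of it (`dS_le_of_agree`), and the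
Boolean state is left as it is. For a fixed strategy, `m` iterations of `G_{f₀}` act on the Boolean
state as the translation `E ↦ E xor v` for a vector `v` depending only on the strategy
(`Gf_f0_iterate`). With an `m`-periodic strategy, `2 * m` iterations apply this translation twice,
which is the identity, so the new point is periodic.
-/

open scoped BigOperators

/-- Along a fixed strategy, `n` iterations of `G_{f₀}` shift the strategy and translate the Boolean
state by a vector independent of that state. -/
theorem Gf_f0_iterate {N : ℕ} (n : ℕ) (S : ℕ → Fin N) :
    ∃ v : Fin N → Bool, ∀ E : Fin N → Bool,
      (Gf f0)^[n] (S, E) = (fun k => S (k + n), fun j => xor (E j) (v j)) := by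
  induction n generalizing S with
  | zero => exact ⟨fun _ => false, fun E => by simp⟩
  | succ n ih =>
    obtain ⟨v, hv⟩ := ih (fun k => S (k + 1))
    refine ⟨fun j => xor (decide (j = S 0)) (v j), fun E => ?_⟩
    rw [Function.iterate_succ_apply]
    simp only [Gf, hv]
    refine Prod.ext ?_ ?_
    · funext k
      simp only
      congr 1
    · funext j
      by_cases h : j = S 0 <;> simp [Ff, f0, h]

/-- The factor `9 / N` in `dS` normalizes the geometric tail `∑_{k ≥ m} N / 10 ^ (k + 1)` to exactly
`10 ^ (-m)`. -/
theorem dS_le_of_agree {N : ℕ} (hN : 1 ≤ N) (m : ℕ) (S T : ℕ → Fin N)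
    (h : ∀ k < m, S k = T k) : dS S T ≤ (1 / 10 : ℝ) ^ m := by
  have hN' : (0 : ℝ) < N := by exact_mod_cast hN
  set f : ℕ → ℝ := fun k => |((S k : ℕ) : ℝ) - ((T k : ℕ) : ℝ)| / 10 ^ (k + 1) with hf
  have hf0 : ∀ k, 0 ≤ f k := fun k => by positivity
  have hfle : ∀ k, f k ≤ (N / 10 : ℝ) * (1 / 10) ^ k := by
    intro k
    have hs : ((S k : ℕ) : ℝ) ≤ N := by exact_mod_cast (S k).isLt.le
    have ht : ((T k : ℕ) : ℝ) ≤ N := by exact_mod_cast (T k).isLt.le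
    have hab : |((S k : ℕ) : ℝ) - ((T k : ℕ) : ℝ)| ≤ N := by
      rw [abs_le]
      constructor <;> linarith [Nat.cast_nonneg (α := ℝ) (S k : ℕ),
        Nat.cast_nonneg (α := ℝ) (T k : ℕ)]
    calc f k ≤ (N : ℝ) / 10 ^ (k + 1) := by simp only [hf]; gcongr
      _ = (N / 10 : ℝ) * (1 / 10) ^ k := by
        rw [one_div, inv_pow, pow_succ]; field_simp
  have hgeo : HasSum (fun k : ℕ => (1 / 10 : ℝ) ^ k) (10 / 9) := by
    convert hasSum_geometric_of_lt_one (r := (1 / 10 : ℝ)) (by norm_num) (by norm_num) using 1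
    norm_num
  have hsum : Summable f :=
    Summable.of_nonneg_of_le hf0 hfle (hgeo.summable.mul_left _)
  have hhead : ∑ k ∈ Finset.range m, f k = 0 :=
    Finset.sum_eq_zero fun k hk => by simp [hf, h k (Finset.mem_range.mp hk)]
  have htail : ∑' k, f (k + m) ≤ (N / 10 * (1 / 10) ^ m : ℝ) * (10 / 9) := by
    refine ((summable_nat_add_iff m).2 hsum).tsum_le_of_sum_le fun s => ?_
    refine (Finset.sum_le_sum fun k _ => (hfle (k + m)).trans_eq ?_).trans
      (sum_le_hasSum s (fun k _ => ?_) (hgeo.mul_left (N / 10 * (1 / 10) ^ m : ℝ)))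
    · rw [pow_add]; ring
    · positivity
  have htot : ∑' k, f k ≤ (N / 10 * (1 / 10) ^ m : ℝ) * (10 / 9) := by
    rw [← hsum.sum_add_tsum_nat_add m, hhead, zero_add]
    exact htail
  calc dS S T = 9 / (N : ℝ) * ∑' k, f k := rfl
    _ ≤ 9 / (N : ℝ) * ((N / 10 * (1 / 10) ^ m : ℝ) * (10 / 9)) := by gcongr
    _ = (1 / 10 : ℝ) ^ m := by field_simp

/-- `G_{f₀}` is regular on `(𝒳, d)`: its periodic points are dense. -/
theorem Gf0_regular (N : ℕ) (hN : 1 ≤ N) :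
    ∀ x : (ℕ → Fin N) × (Fin N → Bool), ∀ ε > (0 : ℝ),
      ∃ y : (ℕ → Fin N) × (Fin N → Bool), ∃ n : ℕ, 0 < n ∧
        dX x y < ε ∧ (Gf f0)^[n] y = y := by
  rintro ⟨S, E⟩ ε hε
  obtain ⟨m, hm⟩ := exists_pow_lt_of_lt_one hε (show (1 / 10 : ℝ) < 1 by norm_num)
  -- The period is `m + 1` rather than `m`, since `m` may be `0`.
  set T : ℕ → Fin N := fun k => S (k % (m + 1)) with hT
  refine ⟨(T, E), (m + 1) + (m + 1), by omega, ?_, ?_⟩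
  · have h1 : dS S T ≤ (1 / 10 : ℝ) ^ m :=
      dS_le_of_agree hN m S T fun k hk => by simp [hT, Nat.mod_eq_of_lt (by omega : k < m + 1)]
    have h2 : dE E E = 0 := by simp [dE]
    simp only [dX, h2, zero_add]
    exact h1.trans_lt hm
  · obtain ⟨v, hv⟩ := Gf_f0_iterate (m + 1) T
    have hper : (fun k => T (k + (m + 1))) = T := by
      funext k
      simp [hT]
    rw [Function.iterate_add_apply, hv, hper, hv, hper]
    simp
end

section
/- Chaotic iterations are chaotic in the sense of Devaney on (𝒳, d): the map G_{f₀} is both regular (its periodic points are dense in 𝒳) and topologically transitive (for every pair of nonempty open sets U, V ⊆ 𝒳 there exists k > 0 such that G_{f₀}^k(U) ∩ V ≠ ∅). -/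
/-!
The metric `dX` makes two phase points with equal Boolean states close as soon as their strategies
agree on a long prefix (`exists_prefix_dX_lt`), while the tail of the strategy is completely free.
A finite word `W` put in front of a strategy `S` is consumed by `W.length` iterations of `Gf f`,
which leave the strategy `S` and the state obtained by updating along `W` (`iterate_prepend`). For
the negation `f0`, any state can be steered to any other by listing the cells where they differ
(`exists_steering`).

Hence, given `(S, E)`, keep a long prefix `L` of `S` and follow it by a word `M` steering the
resulting state to a prescribed one. Steering back to `E` and repeating `L ++ M` forever gives a
periodic point near `(S, E)`; steering to `E'` and continuing with `S'` gives a point near `(S, E)`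
whose orbit hits `(S', E')` exactly.
-/

open scoped BigOperators

/-- Infinite concatenation: the strategy that plays the finite word, then the given strategy. -/
def prepend {N : ℕ} : List (Fin N) → (ℕ → Fin N) → ℕ → Fin N
  | [], S => S
  | a :: L, S => fun n => Nat.casesOn n a (prepend L S)

/-- The Boolean state reached from `E` by updating successively the cells listed in the word. -/
def run {N : ℕ} (f : (Fin N → Bool) → Fin N → Bool) (L : List (Fin N))
    (E : Fin N → Bool) : Fin N → Bool :=
  L.foldl (fun E k => Ff f k E) E

theorem prepend_apply {N : ℕ} (L : List (Fin N)) (S : ℕ → Fin N) (n : ℕ) :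
    prepend L S n = if h : n < L.length then L[n] else S (n - L.length) := by
  induction L generalizing n with
  | nil => simp [prepend]
  | cons a L ih =>
    cases n with
    | zero => simp [prepend]
    | succ n => simp [prepend, ih]

theorem iterate_prepend {N : ℕ} (f : (Fin N → Bool) → Fin N → Bool) (L : List (Fin N))
    (S : ℕ → Fin N) (E : Fin N → Bool) :
    (Gf f)^[L.length] (prepend L S, E) = (S, run f L E) := by
  induction L generalizing E with
  | nil => rfl
  | cons a L ih =>
    rw [List.length_cons, Function.iterate_succ_apply]
    exact ih (Ff f a E)

theorem run_append {N : ℕ} (f : (Fin N → Bool) → Fin N → Bool) (L M : List (Fin N))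
    (E : Fin N → Bool) : run f (L ++ M) E = run f M (run f L E) := by
  simp [run]

theorem run_f0_of_nodup {N : ℕ} (L : List (Fin N)) (hL : L.Nodup) (E : Fin N → Bool)
    (j : Fin N) : run f0 L E j = if j ∈ L then !(E j) else E j := by
  induction L generalizing E with
  | nil => simp [run]
  | cons a L ih =>
    rw [List.nodup_cons] at hL
    change run f0 L (Ff f0 a E) j = _
    rw [ih hL.2]
    by_cases h : j = a
    · subst h
      simp [hL.1, Ff, f0]
    · simp [h, Ff]

theorem exists_steering {N : ℕ} (E F : Fin N → Bool) : ∃ M : List (Fin N), run f0 M E = F := by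
  refine ⟨(Finset.univ.filter fun k => E k ≠ F k).toList, ?_⟩
  funext j
  rw [run_f0_of_nodup _ (Finset.nodup_toList _)]
  cases hE : E j <;> cases hF : F j <;> simp [hE, hF]

theorem dS_le {N : ℕ} (hN : 1 ≤ N) (m : ℕ) (S T : ℕ → Fin N) (h : ∀ k < m, S k = T k) :
    dS S T ≤ 18 * (1 / 2 : ℝ) ^ m := by
  have hN' : (0 : ℝ) < N := by exact_mod_cast hN
  -- A geometric bound valid for every `k`: for `k ≥ m`, `10⁻ᵏ⁻¹ ≤ 4⁻ᵏ ≤ 2⁻ᵐ 2⁻ᵏ`.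
  have hterm : ∀ k, |((S k : ℕ) : ℝ) - ((T k : ℕ) : ℝ)| / 10 ^ (k + 1)
      ≤ (N * (1 / 2 : ℝ) ^ m) * (1 / 2) ^ k := by
    intro k
    by_cases hk : k < m
    · rw [h k hk, sub_self, abs_zero, zero_div]
      positivity
    · have hS : ((S k : ℕ) : ℝ) < N := by exact_mod_cast (S k).isLt
      have hT : ((T k : ℕ) : ℝ) < N := by exact_mod_cast (T k).isLt
      have hS0 : (0 : ℝ) ≤ ((S k : ℕ) : ℝ) := Nat.cast_nonneg _
      have hT0 : (0 : ℝ) ≤ ((T k : ℕ) : ℝ) := Nat.cast_nonneg _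
      have habs : |((S k : ℕ) : ℝ) - ((T k : ℕ) : ℝ)| ≤ N := by
        rw [abs_le]; constructor <;> linarith
      have h1 : (1 / 2 : ℝ) ^ k ≤ (1 / 2) ^ m :=
        pow_le_pow_of_le_one (by norm_num) (by norm_num) (not_lt.mp hk)
      have h2 : (1 : ℝ) / 10 ^ (k + 1) ≤ (1 / 2) ^ k * (1 / 2) ^ k := by
        rw [← mul_pow, ← one_div_pow, pow_succ]
        have h3 : (1 / 10 : ℝ) ^ k ≤ (1 / 2 * (1 / 2)) ^ k :=
          pow_le_pow_left₀ (by norm_num) (by norm_num) k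
        have h4 : (0 : ℝ) ≤ (1 / 10 : ℝ) ^ k := by positivity
        linarith
      calc |((S k : ℕ) : ℝ) - ((T k : ℕ) : ℝ)| / 10 ^ (k + 1)
          ≤ N * (1 / 10 ^ (k + 1)) := by
            rw [mul_one_div]; gcongr
        _ ≤ N * ((1 / 2) ^ m * (1 / 2) ^ k) := by
            gcongr
            exact h2.trans (by gcongr)
        _ = _ := by ring
  have hsum : Summable fun k : ℕ => (N * (1 / 2 : ℝ) ^ m) * (1 / 2) ^ k :=
    summable_geometric_two.mul_left _
  have hle := (Summable.of_nonneg_of_le (fun k => by positivity) hterm hsum).tsum_le_tsum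
    hterm hsum
  rw [tsum_mul_left, tsum_geometric_two] at hle
  calc dS S T ≤ 9 / (N : ℝ) * (N * (1 / 2 : ℝ) ^ m * 2) := by
        unfold dS; gcongr
    _ = 18 * (1 / 2 : ℝ) ^ m := by field_simp; ring

theorem exists_prefix_dX_lt {N : ℕ} (hN : 1 ≤ N) {ε : ℝ} (hε : 0 < ε) :
    ∃ m : ℕ, 0 < m ∧ ∀ (S T : ℕ → Fin N) (E : Fin N → Bool),
      (∀ k < m, S k = T k) → dX (S, E) (T, E) < ε := by
  obtain ⟨n, hn⟩ := exists_pow_lt_of_lt_one (show 0 < ε / 18 by positivity)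
    (show (1 / 2 : ℝ) < 1 by norm_num)
  refine ⟨n + 1, n.succ_pos, fun S T E h => ?_⟩
  have h1 := dS_le hN n S T fun k hk => h k (by omega)
  have h2 : dE E E = 0 := by simp [dE]
  simp only [dX, h2]
  linarith

theorem prepend_ofFn_append {N : ℕ} (m : ℕ) (S T : ℕ → Fin N) (M : List (Fin N)) :
    ∀ k < m, S k = prepend (List.ofFn (fun i : Fin m => S i) ++ M) T k := by
  intro k hk
  rw [prepend_apply, dif_pos (by simp; omega), List.getElem_append_left (by simpa using hk)]
  simp

/-- Every nonempty word has an infinite periodic repetition. -/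
theorem exists_prepend_eq_self {N : ℕ} (W : List (Fin N)) (hW : 0 < W.length) :
    ∃ T : ℕ → Fin N, prepend W T = T := by
  refine ⟨fun n => W[n % W.length]'(Nat.mod_lt _ hW), ?_⟩
  funext n
  rw [prepend_apply]
  split_ifs with h
  · simp [Nat.mod_eq_of_lt h]
  · simp [← Nat.mod_eq_sub_mod (not_lt.mp h)]

/-- Chaotic iterations are chaotic in the sense of Devaney on `(𝒳, d)`:
`G_{f₀}` is regular and topologically transitive. -/
theorem Gf0_devaney_chaotic (N : ℕ) (hN : 1 ≤ N) :
    (∀ x : (ℕ → Fin N) × (Fin N → Bool), ∀ ε > (0 : ℝ),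
      ∃ y : (ℕ → Fin N) × (Fin N → Bool), ∃ n : ℕ, 0 < n ∧
        dX x y < ε ∧ (Gf f0)^[n] y = y) ∧
    (∀ U V : Set ((ℕ → Fin N) × (Fin N → Bool)),
      isOpenX U → isOpenX V → U.Nonempty → V.Nonempty →
        ∃ k : ℕ, 0 < k ∧ ((Gf f0)^[k] '' U ∩ V).Nonempty) := by
  constructor
  · rintro ⟨S, E⟩ ε hε
    obtain ⟨m, hm, hclose⟩ := exists_prefix_dX_lt hN hε
    obtain ⟨M, hM⟩ := exists_steering (run f0 (List.ofFn fun i : Fin m => S i) E) E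
    have hlen : 0 < (List.ofFn (fun i : Fin m => S i) ++ M).length := by simp; omega
    obtain ⟨T, hT⟩ := exists_prepend_eq_self _ hlen
    refine ⟨(T, E), _, hlen, hclose S T E ?_, ?_⟩
    · have := prepend_ofFn_append m S T M
      rwa [hT] at this
    · have := iterate_prepend f0 (List.ofFn (fun i : Fin m => S i) ++ M) T E
      rwa [hT, run_append, hM] at this
  · rintro U V hU - ⟨⟨S, E⟩, hx⟩ ⟨⟨S', E'⟩, hy⟩
    obtain ⟨ε, hε, hball⟩ := hU _ hx
    obtain ⟨m, hm, hclose⟩ := exists_prefix_dX_lt hN hε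
    obtain ⟨M, hM⟩ := exists_steering (run f0 (List.ofFn fun i : Fin m => S i) E) E'
    refine ⟨(List.ofFn (fun i : Fin m => S i) ++ M).length, by simp; omega, (S', E'),
      ⟨_, hball _ (hclose S _ E (prepend_ofFn_append m S S' M)), ?_⟩, hy⟩
    rw [iterate_prepend, run_append, hM]
end

section
/- The dynamical system (𝒳, G_{f₀}) is indecomposable: the phase space 𝒳 cannot be written as the union A ∪ B of two closed proper subsets A ⊊ 𝒳 and B ⊊ 𝒳 satisfying G_{f₀}(A) ⊆ A and G_{f₀}(B) ⊆ B. -/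
/-! The map `G_{f₀}` is transitive in a strong form: arbitrarily close to every point `x` there is
a point `z` whose orbit hits a prescribed point `y` exactly. Indeed, let `z` have the same state as
`x` and follow the strategy of `x` for `n` steps (`exists_follow`); this already forces `z` to be
within `10 * (1/10)^n` of `x` (`dX_le_of_agree`). After these `n` steps, `f₀` lets the strategy
negate one cell at a time, so it can be continued by listing the cells that differ from the state
of `y`, and then by the strategy of `y` (`exists_reach`).

If the phase space were `A ∪ B` as in the statement, choose `x ∉ A` and `y ∉ B`. Since `Aᶜ` is
open, some such `z` lies outside `A`, hence in `B`, and invariance of `B` gives `y ∈ B`. -/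

open scoped BigOperators

/-- Closed sets of the metric topology induced by `dX` on the phase space 𝒳. -/
def isClosedX {N : ℕ} (A : Set ((ℕ → Fin N) × (Fin N → Bool))) : Prop :=
  isOpenX Aᶜ

/-- Every state can be steered by a suitable strategy to the exact point `(T, F)`, here with
the initial state written as `F` negated on a set `s` of cells: the strategy lists `s`. -/
lemma exists_reach_aux {N : ℕ} (T : ℕ → Fin N) (F : Fin N → Bool) (s : Finset (Fin N)) :
    ∃ (S : ℕ → Fin N) (m : ℕ),
      (Gf f0)^[m] (S, fun j => if j ∈ s then !(F j) else F j) = (T, F) := by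
  induction s using Finset.induction_on with
  | empty => exact ⟨T, 0, by simp⟩
  | insert a s ha ih =>
    obtain ⟨S, m, h⟩ := ih
    refine ⟨fun k => Nat.casesOn k a S, m + 1, ?_⟩
    rw [Function.iterate_succ_apply, ← h]
    congr 1
    refine Prod.ext rfl (funext fun j => ?_)
    by_cases hj : j = a
    · subst hj
      simp [Gf, Ff, f0, ha]
    · simp [Gf, Ff, hj]

lemma exists_reach {N : ℕ} (E : Fin N → Bool) (y : (ℕ → Fin N) × (Fin N → Bool)) :
    ∃ (S : ℕ → Fin N) (m : ℕ), (Gf f0)^[m] (S, E) = y := by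
  obtain ⟨S, m, h⟩ := exists_reach_aux y.1 y.2 (Finset.univ.filter fun k => E k ≠ y.2 k)
  refine ⟨S, m, ?_⟩
  have hE : (fun j => if j ∈ (Finset.univ.filter fun k => E k ≠ y.2 k) then !(y.2 j)
      else y.2 j) = E := by
    funext j
    cases h1 : E j <;> cases h2 : y.2 j <;> simp [h1, h2]
  rwa [hE] at h

/-- The strategy of `x` can be replaced by any `W` from time `n` on without affecting the state
reached at time `n`. -/
lemma exists_follow {N : ℕ} (f : (Fin N → Bool) → Fin N → Bool) (W : ℕ → Fin N) (n : ℕ)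
    (x : (ℕ → Fin N) × (Fin N → Bool)) :
    ∃ z : (ℕ → Fin N) × (Fin N → Bool), z.2 = x.2 ∧ (∀ k < n, z.1 k = x.1 k) ∧
      (Gf f)^[n] z = (W, ((Gf f)^[n] x).2) := by
  induction n generalizing x with
  | zero => exact ⟨(W, x.2), rfl, by simp, rfl⟩
  | succ n ih =>
    obtain ⟨z, hz2, hz1, hz⟩ := ih (Gf f x)
    refine ⟨(fun k => Nat.casesOn k (x.1 0) z.1, x.2), rfl, ?_, ?_⟩
    · rintro (_ | k) hk
      · rfl
      · exact hz1 k (by omega)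
    · rw [Function.iterate_succ_apply, Function.iterate_succ_apply, ← hz]
      congr 1
      exact Prod.ext rfl hz2.symm

lemma dX_le_of_agree {N : ℕ} (hN : 1 ≤ N) {x z : (ℕ → Fin N) × (Fin N → Bool)} {n : ℕ}
    (h2 : z.2 = x.2) (h1 : ∀ k < n, z.1 k = x.1 k) : dX x z ≤ 10 * (1 / 10 : ℝ) ^ n := by
  have hN' : (0 : ℝ) < N := by exact_mod_cast hN
  set a : ℕ → ℝ := fun k => |((x.1 k : ℕ) : ℝ) - ((z.1 k : ℕ) : ℝ)| / 10 ^ (k + 1) with ha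
  have ha0 : ∀ k, 0 ≤ a k := fun k => by positivity
  have hab : ∀ k, a k ≤ N * (1 / 10 : ℝ) ^ k := by
    intro k
    have hx : ((x.1 k : ℕ) : ℝ) ≤ N := by exact_mod_cast (x.1 k).2.le
    have hz : ((z.1 k : ℕ) : ℝ) ≤ N := by exact_mod_cast (z.1 k).2.le
    have hd : |((x.1 k : ℕ) : ℝ) - ((z.1 k : ℕ) : ℝ)| ≤ N := by
      rw [abs_le]
      constructor <;> linarith [Nat.cast_nonneg (α := ℝ) (x.1 k : ℕ),
        Nat.cast_nonneg (α := ℝ) (z.1 k : ℕ)]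
    calc a k ≤ N / 10 ^ (k + 1) := by simp only [ha]; gcongr
      _ ≤ N / 10 ^ k := by gcongr <;> norm_num
      _ = N * (1 / 10 : ℝ) ^ k := by rw [one_div, inv_pow, div_eq_mul_inv]
  have hgeo : HasSum (fun k : ℕ => (1 / 10 : ℝ) ^ k) (1 - 1 / 10)⁻¹ :=
    hasSum_geometric_of_lt_one (by norm_num) (by norm_num)
  have hsum : Summable a := Summable.of_nonneg_of_le ha0 hab (hgeo.summable.mul_left _)
  have htail : ∑' k, a (k + n) ≤ N * (1 / 10 : ℝ) ^ n * (1 - 1 / 10)⁻¹ := by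
    refine hasSum_le (fun k => ?_) ((summable_nat_add_iff n).2 hsum).hasSum
      (hgeo.mul_left (N * (1 / 10 : ℝ) ^ n))
    exact (hab (k + n)).trans_eq (by ring)
  have hhead : ∑ k ∈ Finset.range n, a k = 0 :=
    Finset.sum_eq_zero fun k hk => by simp [ha, h1 k (Finset.mem_range.1 hk)]
  have hE : dE x.2 z.2 = 0 := by simp [dE, h2]
  have hS : dS x.1 z.1 = 9 / N * ∑' k, a k := rfl
  rw [dX, hE, hS, ← hsum.sum_add_tsum_nat_add n, hhead, zero_add, zero_add]
  calc 9 / (N : ℝ) * ∑' k, a (k + n)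
      ≤ 9 / N * (N * (1 / 10 : ℝ) ^ n * (1 - 1 / 10)⁻¹) := by gcongr
    _ = 10 * (1 / 10 : ℝ) ^ n := by field_simp; norm_num

/-- The dynamical system `(𝒳, G_{f₀})` is indecomposable: the phase space is not the
union of two closed proper subsets that are both invariant under `G_{f₀}`. -/
theorem Gf0_indecomposable (N : ℕ) (hN : 1 ≤ N) :
    ¬ ∃ A B : Set ((ℕ → Fin N) × (Fin N → Bool)), isClosedX A ∧ isClosedX B ∧
      A ≠ Set.univ ∧ B ≠ Set.univ ∧ A ∪ B = Set.univ ∧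
      Gf f0 '' A ⊆ A ∧ Gf f0 '' B ⊆ B := by
  rintro ⟨A, B, hA, -, hA1, hB1, hAB, -, hBB⟩
  obtain ⟨x, hx⟩ := (Set.ne_univ_iff_exists_notMem A).1 hA1
  obtain ⟨y, hy⟩ := (Set.ne_univ_iff_exists_notMem B).1 hB1
  obtain ⟨ε, hε, hball⟩ := hA x hx
  obtain ⟨n, hn⟩ := exists_pow_lt_of_lt_one (show (0 : ℝ) < ε / 10 by linarith)
    (show (1 / 10 : ℝ) < 1 by norm_num)
  obtain ⟨S, m, hS⟩ := exists_reach ((Gf f0)^[n] x).2 y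
  obtain ⟨z, hz2, hz1, hz⟩ := exists_follow f0 S n x
  have hzA : z ∉ A := hball z (by linarith [dX_le_of_agree hN hz2 hz1])
  have hzB : z ∈ B := (hAB ▸ Set.mem_univ z : z ∈ A ∪ B).resolve_left hzA
  have hmaps : Set.MapsTo (Gf f0) B B := Set.mapsTo_iff_image_subset.2 hBB
  have key := hmaps.iterate m (hmaps.iterate n hzB)
  rw [hz, hS] at key
  exact hy key
end

section
/- The chaotic-iteration state of the surveillance scheme remains uniformly distributed at every step (security in the Chosen Key Attack framework): let (Ω, ℱ, P) be a probability space and N ≥ 1. Let X_n : Ω → 𝔹^N and S_n : Ω → {1,…,N} (for n ∈ ℕ) be random variables such that X_0 is uniformly distributed on 𝔹^N, for each n the random variables X_n and S_n are independent, and X_{n+1}(ω) = Φ(X_n(ω), S_n(ω)) for all ω, where Φ(E,k) is the Boolean vector obtained from E by negating its k-th coordinate. Then for every n ∈ ℕ, X_n is uniformly distributed on 𝔹^N. -/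
/-!
Conditioning on the value `k` of the strategy `S n`, the event `X (n + 1) = e` becomes
`X n = flipBit e k`, because negating a fixed coordinate is an involution. By independence its
probability is `P (X n = flipBit e k) * P (S n = k) = (1 / 2 ^ N) * P (S n = k)`, and summing over
`k` gives `1 / 2 ^ N`, since the probabilities of the values of `S n` add up to one. The claim
follows by induction on `n`; the law of `S n` plays no role.
-/

open MeasureTheory ProbabilityTheory

/-- `Φ E k` is the Boolean vector obtained from `E` by negating its `k`-th coordinate
and leaving the others unchanged. -/
def flipBit {N : ℕ} (E : Fin N → Bool) (k : Fin N) : Fin N → Bool :=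
  fun j => if j = k then !(E j) else E j

lemma flipBit_flipBit {N : ℕ} (E : Fin N → Bool) (k : Fin N) :
    flipBit (flipBit E k) k = E := by
  funext j
  by_cases h : j = k <;> simp [flipBit, h]

lemma flipBit_eq_iff {N : ℕ} (E e : Fin N → Bool) (k : Fin N) :
    flipBit E k = e ↔ E = flipBit e k := by
  constructor <;> rintro rfl <;> simp [flipBit_flipBit]

/-- The chaotic-iteration state of the surveillance scheme remains uniformly
distributed at every step (security in the Chosen Key Attack framework). -/
theorem state_uniform_at_every_step (N : ℕ) (hN : 1 ≤ N)
    {Ω : Type*} [MeasurableSpace Ω] (P : Measure Ω) [IsProbabilityMeasure P]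
    (X : ℕ → Ω → (Fin N → Bool)) (S : ℕ → Ω → Fin N)
    (hXmeas : ∀ n, Measurable (X n)) (hSmeas : ∀ n, Measurable (S n))
    (hX0 : ∀ e : Fin N → Bool, P {ω | X 0 ω = e} = 1 / 2 ^ N)
    (hindep : ∀ n, IndepFun (X n) (S n) P)
    (hrec : ∀ n ω, X (n + 1) ω = flipBit (X n ω) (S n ω)) :
    ∀ n, ∀ e : Fin N → Bool, P {ω | X n ω = e} = 1 / 2 ^ N := by
  intro n
  induction n with
  | zero => exact hX0
  | succ n ih =>
    intro e
    have hset : {ω | X (n + 1) ω = e} =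
        ⋃ k ∈ (Finset.univ : Finset (Fin N)), (X n ⁻¹' {flipBit e k} ∩ S n ⁻¹' {k}) := by
      ext ω
      simp [hrec, flipBit_eq_iff]
    have hdisj : Set.PairwiseDisjoint (↑(Finset.univ : Finset (Fin N)))
        (fun k => X n ⁻¹' {flipBit e k} ∩ S n ⁻¹' {k}) := by
      intro i _ j _ hij
      refine Set.disjoint_left.2 ?_
      rintro ω ⟨_, hi⟩ ⟨_, hj⟩
      exact hij (hi.symm.trans hj)
    have hterm : ∀ k : Fin N, P (X n ⁻¹' {flipBit e k} ∩ S n ⁻¹' {k}) =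
        1 / 2 ^ N * P (S n ⁻¹' {k}) := by
      intro k
      rw [(hindep n).measure_inter_preimage_eq_mul _ _ (measurableSet_singleton _)
        (measurableSet_singleton _)]
      congr 1
      exact ih (flipBit e k)
    have hsum : ∑ k : Fin N, P (S n ⁻¹' {k}) = 1 := by
      rw [sum_measure_preimage_singleton _
        (fun k _ => hSmeas n (measurableSet_singleton k))]
      simp
    rw [hset, measure_biUnion_finset hdisj (fun k _ =>
      (hXmeas n (measurableSet_singleton _)).inter (hSmeas n (measurableSet_singleton _)))]
    simp_rw [hterm]
    rw [← Finset.mul_sum, hsum, mul_one]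
end
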